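/- For α = √(π/2), the annihilation operator on the first mode acts on the code states as â₁² |ℓ,m⟩_code = (−1)^{ℓ+m} α² |ℓ,m⟩_code, where |0,0⟩ = |1_α⟩|0_{iα}⟩, |0,1⟩ = |1_{iα}⟩|0_α⟩, |1,0⟩ = |0_{iα}⟩|1_α⟩, |1,1⟩ = |0_α⟩|1_{iα}⟩; equivalently Π(â₁² + â₁†²)Π = 2α² Z_L Z_M Π where Π is the projector onto the code space. -/

import Mathlib

local notation "⟪" x ", " y "⟫" => @inner ℂ _ _ x y

/-- The normalized two-mode product cat state `|k_β⟩ ⊗ |l_γ⟩`, expressed in terms of the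
two-mode coherent states `coh2 (β, γ) = |β⟩⊗|γ⟩`. -/
noncomputable def catState2 {H2 : Type*} [NormedAddCommGroup H2] [InnerProductSpace ℂ H2]
    (coh2 : ℂ × ℂ → H2) (k l : ℕ) (β γ : ℂ) : H2 :=
  (‖coh2 (β, γ) + ((-1 : ℂ)) ^ l • coh2 (β, -γ) + ((-1 : ℂ)) ^ k • coh2 (-β, γ)
      + ((-1 : ℂ)) ^ (k + l) • coh2 (-β, -γ)‖⁻¹ : ℝ) •
    (coh2 (β, γ) + ((-1 : ℂ)) ^ l • coh2 (β, -γ) + ((-1 : ℂ)) ^ k • coh2 (-β, γ)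
      + ((-1 : ℂ)) ^ (k + l) • coh2 (-β, -γ))

/-- The code basis states of the two-mode Fourier cat code:
`|0,0⟩ = |1_α⟩|0_{iα}⟩`, `|0,1⟩ = |1_{iα}⟩|0_α⟩`, `|1,0⟩ = |0_{iα}⟩|1_α⟩`,
`|1,1⟩ = |0_α⟩|1_{iα}⟩`. -/
noncomputable def fourierCodeState {H2 : Type*} [NormedAddCommGroup H2]
    [InnerProductSpace ℂ H2] (coh2 : ℂ × ℂ → H2) (α : ℂ) (ℓ m : Fin 2) : H2 :=
  catState2 coh2 (1 - (ℓ : ℕ)) (ℓ : ℕ)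
    (if ((ℓ : ℕ) + (m : ℕ)) % 2 = 0 then α else Complex.I * α)
    (if ((ℓ : ℕ) + (m : ℕ)) % 2 = 0 then Complex.I * α else α)

/-- `â₁²` acts on a two-mode cat state as multiplication by `β²`. -/
lemma a1_sq_catState2 {H2 : Type*} [NormedAddCommGroup H2] [InnerProductSpace ℂ H2]
    (coh2 : ℂ × ℂ → H2) (a1 : H2 →ₗ[ℂ] H2)
    (ha1 : ∀ β γ : ℂ, a1 (coh2 (β, γ)) = β • coh2 (β, γ)) (k l : ℕ) (β γ : ℂ) :
    a1 (a1 (catState2 coh2 k l β γ)) = β ^ 2 • catState2 coh2 k l β γ := by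
  unfold catState2
  generalize (‖coh2 (β, γ) + ((-1 : ℂ)) ^ l • coh2 (β, -γ) + ((-1 : ℂ)) ^ k • coh2 (-β, γ)
      + ((-1 : ℂ)) ^ (k + l) • coh2 (-β, -γ)‖⁻¹ : ℝ) = r
  rw [← Complex.coe_smul r]
  simp only [map_smul, map_add, ha1]
  module

/-- Two product cat states are orthogonal as soon as they are so in one of the two modes. -/
lemma inner_catState2_eq_zero {H2 : Type*} [NormedAddCommGroup H2] [InnerProductSpace ℂ H2]
    (coh2 : ℂ × ℂ → H2)
    (hcoh2 : ∀ β γ : ℂ × ℂ, ⟪coh2 β, coh2 γ⟫ =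
      Complex.exp (-(Complex.normSq β.1 : ℂ) / 2 - (Complex.normSq γ.1 : ℂ) / 2
          + (starRingEnd ℂ) β.1 * γ.1) *
      Complex.exp (-(Complex.normSq β.2 : ℂ) / 2 - (Complex.normSq γ.2 : ℂ) / 2
          + (starRingEnd ℂ) β.2 * γ.2))
    (k l k' l' : ℕ) (β γ β' γ' : ℂ)
    (h : (1 + (-1 : ℂ) ^ (l + l')) * Complex.exp ((starRingEnd ℂ) γ * γ') +
      ((-1 : ℂ) ^ l + (-1 : ℂ) ^ l') * Complex.exp (-((starRingEnd ℂ) γ * γ')) = 0 ∨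
      (1 + (-1 : ℂ) ^ (k + k')) * Complex.exp ((starRingEnd ℂ) β * β') +
      ((-1 : ℂ) ^ k + (-1 : ℂ) ^ k') * Complex.exp (-((starRingEnd ℂ) β * β')) = 0) :
    ⟪catState2 coh2 k l β γ, catState2 coh2 k' l' β' γ'⟫ = 0 := by
  unfold catState2
  rw [← Complex.coe_smul, ← Complex.coe_smul, inner_smul_left, inner_smul_right]
  have key : ⟪coh2 (β, γ) + ((-1 : ℂ)) ^ l • coh2 (β, -γ) + ((-1 : ℂ)) ^ k • coh2 (-β, γ)
      + ((-1 : ℂ)) ^ (k + l) • coh2 (-β, -γ),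
      coh2 (β', γ') + ((-1 : ℂ)) ^ l' • coh2 (β', -γ') + ((-1 : ℂ)) ^ k' • coh2 (-β', γ')
      + ((-1 : ℂ)) ^ (k' + l') • coh2 (-β', -γ')⟫ = 0 := by
    simp only [inner_add_left, inner_add_right, inner_smul_left, inner_smul_right, hcoh2,
      Complex.normSq_neg, map_neg, map_pow, map_one, Complex.exp_add, neg_mul, mul_neg, neg_neg]
    simp only [pow_add] at h ⊢
    generalize Complex.exp ((starRingEnd ℂ) γ * γ') = X at *
    generalize Complex.exp (-((starRingEnd ℂ) γ * γ')) = Y at *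
    generalize Complex.exp ((starRingEnd ℂ) β * β') = Z at *
    generalize Complex.exp (-((starRingEnd ℂ) β * β')) = W at *
    generalize Complex.exp (-(Complex.normSq β : ℂ) / 2 - (Complex.normSq β' : ℂ) / 2) = P at *
    generalize Complex.exp (-(Complex.normSq γ : ℂ) / 2 - (Complex.normSq γ' : ℂ) / 2) = Q at *
    generalize (-1 : ℂ) ^ k = a at *
    generalize (-1 : ℂ) ^ l = b at *
    generalize (-1 : ℂ) ^ k' = c at *
    generalize (-1 : ℂ) ^ l' = d at *
    rcases h with h | h
    · linear_combination (P * Q * ((1 + a * c) * Z + (a + c) * W)) * h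
    · linear_combination (P * Q * ((1 + b * d) * X + (b + d) * Y)) * h
  rw [key]
  simp

/-- **Action of `â₁²` on the two-mode Fourier cat code at `α = √(π/2)`.**
The square of the annihilation operator of the first mode acts on the code states as
`â₁² |ℓ,m⟩ = (−1)^{ℓ+m} α² |ℓ,m⟩`; equivalently, the compression of `â₁² + â₁†²` to the
code space is `2α² Z_L Z_M`, i.e. `Π(â₁² + â₁†²)Π = 2α² Z_L Z_M Π` in matrix elements. -/
theorem a1_sq_action_on_fourier_cat_code
    {H2 : Type*} [NormedAddCommGroup H2] [InnerProductSpace ℂ H2]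
    (coh2 : ℂ × ℂ → H2)
    (hcoh2 : ∀ β γ : ℂ × ℂ, ⟪coh2 β, coh2 γ⟫ =
      Complex.exp (-(Complex.normSq β.1 : ℂ) / 2 - (Complex.normSq γ.1 : ℂ) / 2
          + (starRingEnd ℂ) β.1 * γ.1) *
      Complex.exp (-(Complex.normSq β.2 : ℂ) / 2 - (Complex.normSq γ.2 : ℂ) / 2
          + (starRingEnd ℂ) β.2 * γ.2))
    (a1 a1d : H2 →ₗ[ℂ] H2)
    -- `a1` is the annihilation operator of the first mode, `a1d` its adjoint
    (ha1 : ∀ β γ : ℂ, a1 (coh2 (β, γ)) = β • coh2 (β, γ))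
    (hadj : ∀ v w : H2, ⟪a1d v, w⟫ = ⟪v, a1 w⟫) :
    let α : ℂ := (Real.sqrt (Real.pi / 2) : ℂ)
    (∀ ℓ m : Fin 2,
      a1 (a1 (fourierCodeState coh2 α ℓ m)) =
        (((-1 : ℂ)) ^ ((ℓ : ℕ) + (m : ℕ)) * α ^ 2) • fourierCodeState coh2 α ℓ m) ∧
    (∀ ℓ m ℓ' m' : Fin 2,
      ⟪fourierCodeState coh2 α ℓ' m',
        a1 (a1 (fourierCodeState coh2 α ℓ m)) + a1d (a1d (fourierCodeState coh2 α ℓ m))⟫ =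
        2 * α ^ 2 * ((-1 : ℂ)) ^ ((ℓ : ℕ) + (m : ℕ)) *
          ⟪fourierCodeState coh2 α ℓ' m', fourierCodeState coh2 α ℓ m⟫) := by
  intro α
  have hα : α * α = (Real.pi / 2 : ℂ) := by
    have h0 : Real.sqrt (Real.pi / 2) * Real.sqrt (Real.pi / 2) = Real.pi / 2 :=
      Real.mul_self_sqrt (by positivity)
    have h1 := congrArg (fun x : ℝ => (x : ℂ)) h0
    push_cast at h1
    exact h1
  have hc : (starRingEnd ℂ) α = α := Complex.conj_ofReal _
  have first : ∀ ℓ m : Fin 2,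
      a1 (a1 (fourierCodeState coh2 α ℓ m)) =
        (((-1 : ℂ)) ^ ((ℓ : ℕ) + (m : ℕ)) * α ^ 2) • fourierCodeState coh2 α ℓ m := by
    intro ℓ m
    unfold fourierCodeState
    rw [a1_sq_catState2 coh2 a1 ha1]
    congr 1
    fin_cases ℓ <;> fin_cases m <;> simp [mul_pow]
  have e1 : Complex.exp ((Real.pi / 2 : ℂ) * Complex.I) = Complex.I :=
    Complex.exp_pi_div_two_mul_I
  have e2 : Complex.exp (-((Real.pi / 2 : ℂ) * Complex.I)) = -Complex.I := by
    rw [Complex.exp_neg, e1, Complex.inv_I]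
  have x1 : α * (Complex.I * α) = (Real.pi / 2 : ℂ) * Complex.I := by
    linear_combination Complex.I * hα
  have x2 : Complex.I * α * α = (Real.pi / 2 : ℂ) * Complex.I := by
    linear_combination Complex.I * hα
  have orth : ∀ ℓ m ℓ' m' : Fin 2, ((ℓ : ℕ) + m) % 2 ≠ ((ℓ' : ℕ) + m') % 2 →
      ⟪fourierCodeState coh2 α ℓ' m', fourierCodeState coh2 α ℓ m⟫ = 0 := by
    intro ℓ m ℓ' m' hne
    unfold fourierCodeState
    apply inner_catState2_eq_zero coh2 hcoh2
    fin_cases ℓ <;> fin_cases m <;> fin_cases ℓ' <;> fin_cases m' <;>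
      simp [hc, x1, x2, e1, e2] at hne ⊢
  refine ⟨first, ?_⟩
  intro ℓ m ℓ' m'
  have hadj' : ∀ v w : H2, ⟪w, a1d v⟫ = ⟪a1 w, v⟫ := by
    intro v w
    rw [← inner_conj_symm, hadj, inner_conj_symm]
  rw [inner_add_right, hadj', hadj', first, first, inner_smul_left, inner_smul_right]
  simp only [map_mul, map_pow, map_neg, map_one, hc]
  by_cases hp : ((ℓ : ℕ) + m) % 2 = ((ℓ' : ℕ) + m') % 2
  · have : (-1 : ℂ) ^ ((ℓ' : ℕ) + m') = (-1 : ℂ) ^ ((ℓ : ℕ) + m) := by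
      rw [neg_one_pow_eq_pow_mod_two, ← hp, ← neg_one_pow_eq_pow_mod_two]
    rw [this]
    ring
  · rw [orth ℓ m ℓ' m' hp]
    simp
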